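/- arXiv:2301.08777 — 4 statements merged into one kernel-verified Lean document; each statement's English description precedes it below -/
import Mathlib

section
/- Let G be a tournament of order at least 3. Then for every integer t ≥ 1, the iterated tournament ILTT^t(G) is strong if and only if G is strong. -/
open scoped Classical

noncomputable section

/-- A tournament: a finite directed graph where every pair of distinct nodes
is joined by exactly one arc. -/
structure Tournament where
  V : Type
  [fintypeV : Fintype V]
  [decEqV : DecidableEq V]
  arc : V → V → Prop
  irrefl : ∀ x, ¬ arc x x
  exactlyOne : ∀ x y, x ≠ y → (arc x y ↔ ¬ arc y x)

attribute [instance] Tournament.fintypeV Tournament.decEqV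

namespace Tournament

/-- The ILTT extension: vertices are `V ⊕ V` where `Sum.inl x` is the original
node `x` and `Sum.inr x` is its clone `x'`. -/
def ILTT (T : Tournament) : Tournament where
  V := T.V ⊕ T.V
  arc := fun u v =>
    match u, v with
    | Sum.inl x, Sum.inl y => T.arc x y
    | Sum.inl x, Sum.inr y => T.arc x y
    | Sum.inr x, Sum.inl y => T.arc x y ∨ x = y
    | Sum.inr x, Sum.inr y => T.arc x y
  irrefl := by rintro (x | x) h <;> exact T.irrefl x h
  exactlyOne := by
    rintro (x | x) (y | y) hxy
    · exact T.exactlyOne x y (fun h => hxy (by rw [h]))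
    · by_cases h : x = y
      · subst h; simp [T.irrefl x]
      · have := T.exactlyOne x y h
        simp only [not_or]
        constructor
        · intro ha; exact ⟨this.mp ha, fun h' => h h'.symm⟩
        · intro ha; exact this.mpr ha.1
    · by_cases h : x = y
      · subst h; simp [T.irrefl x]
      · have := T.exactlyOne x y h
        constructor
        · rintro (ha | ha)
          · exact this.mp ha
          · exact absurd ha h
        · intro ha; exact Or.inl (this.mpr ha)
    · exact T.exactlyOne x y (fun h => hxy (by rw [h]))

/-- The dual ILTT extension: identical to `ILTT` except the arcs between
clones are reversed. -/
def ILTTd (T : Tournament) : Tournament where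
  V := T.V ⊕ T.V
  arc := fun u v =>
    match u, v with
    | Sum.inl x, Sum.inl y => T.arc x y
    | Sum.inl x, Sum.inr y => T.arc x y
    | Sum.inr x, Sum.inl y => T.arc x y ∨ x = y
    | Sum.inr x, Sum.inr y => T.arc y x
  irrefl := by rintro (x | x) h <;> exact T.irrefl x h
  exactlyOne := by
    rintro (x | x) (y | y) hxy
    · exact T.exactlyOne x y (fun h => hxy (by rw [h]))
    · by_cases h : x = y
      · subst h; simp [T.irrefl x]
      · have := T.exactlyOne x y h
        simp only [not_or]
        constructor
        · intro ha; exact ⟨this.mp ha, fun h' => h h'.symm⟩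
        · intro ha; exact this.mpr ha.1
    · by_cases h : x = y
      · subst h; simp [T.irrefl x]
      · have := T.exactlyOne x y h
        constructor
        · rintro (ha | ha)
          · exact this.mp ha
          · exact absurd ha h
        · intro ha; exact Or.inl (this.mpr ha)
    · exact T.exactlyOne y x (fun h => hxy (by rw [h]))

/-- A tournament is strong if, for every ordered pair of nodes, there is a
directed path from the first to the second. -/
def Strong (T : Tournament) : Prop := ∀ u v : T.V, Relation.ReflTransGen T.arc u v

/-- `HasWalk T u v n` : there is a directed walk of length `n` from `u` to `v`. -/
def HasWalk (T : Tournament) (u v : T.V) (n : ℕ) : Prop :=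
  ∃ f : Fin (n + 1) → T.V, f 0 = u ∧ f (Fin.last n) = v ∧
    ∀ i : Fin n, T.arc (f i.castSucc) (f i.succ)

/-- The distance from `u` to `v`: the length of a shortest directed path. -/
def dist (T : Tournament) (u v : T.V) : ℕ := sInf {n | HasWalk T u v n}

/-- The diameter: the maximum distance over ordered pairs of distinct nodes. -/
def diam (T : Tournament) : ℕ :=
  (Finset.univ.filter (fun p : T.V × T.V => p.1 ≠ p.2)).sup
    (fun p => T.dist p.1 p.2)

/-- The Wiener index: the sum of distances over ordered pairs of distinct nodes. -/
def wiener (T : Tournament) : ℕ :=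
  ∑ p ∈ Finset.univ.filter (fun p : T.V × T.V => p.1 ≠ p.2), T.dist p.1 p.2

/-- The average distance `L(T) = W(T)/(m(m-1))` where `m` is the order. -/
def avgDist (T : Tournament) : ℝ :=
  (T.wiener : ℝ) / ((Fintype.card T.V : ℝ) * ((Fintype.card T.V : ℝ) - 1))

/-- `J` is a subtournament of `K`. -/
def IsSubtournament (J K : Tournament) : Prop :=
  ∃ f : J.V → K.V, Function.Injective f ∧ ∀ u v : J.V, J.arc u v ↔ K.arc (f u) (f v)

/-- The linear order on `t` nodes. -/
def linearTournament (t : ℕ) : Tournament where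
  V := Fin t
  arc := fun i j => i < j
  irrefl := fun i => lt_irrefl i
  exactlyOne := fun i j h => by
    rw [not_lt]
    exact ⟨le_of_lt, fun hle => hle.lt_of_ne h⟩

/-- A tournament is Hamiltonian if it has a directed cycle through all nodes. -/
def IsHamiltonian (T : Tournament) : Prop :=
  ∃ f : ZMod (Fintype.card T.V) ≃ T.V, ∀ i, T.arc (f i) (f (i + 1))

/-- `S` is an in-dominating set. -/
def InDom (T : Tournament) (S : Finset T.V) : Prop :=
  ∀ u, u ∉ S → ∃ v ∈ S, T.arc u v

/-- `S` is an out-dominating set. -/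
def OutDom (T : Tournament) (S : Finset T.V) : Prop :=
  ∀ u, u ∉ S → ∃ v ∈ S, T.arc v u

/-- The in-domination number. -/
def inDomNum (T : Tournament) : ℕ := sInf {n | ∃ S : Finset T.V, T.InDom S ∧ S.card = n}

/-- The out-domination number. -/
def outDomNum (T : Tournament) : ℕ := sInf {n | ∃ S : Finset T.V, T.OutDom S ∧ S.card = n}

end Tournament

open Tournament

/-!
Sending every clone to its original turns each arc of `ILTT(G)` into an arc of `G` or a single node,
so directed paths of `ILTT(G)` project to `G`. Conversely, a strong `G` sits inside `ILTT(G)`, and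
every clone `x'` is attached to it in both directions: `x'` has the arc to `x`, and `x'` receives an
arc from any in-neighbour of `x`, which exists because `x` is reached from another node of `G`.
-/

namespace Tournament

variable {T : Tournament}

section Arcs

variable {x y : T.V}

@[simp]
theorem ILTT_arc_inl_inl : T.ILTT.arc (Sum.inl x) (Sum.inl y) ↔ T.arc x y := .rfl

@[simp]
theorem ILTT_arc_inl_inr : T.ILTT.arc (Sum.inl x) (Sum.inr y) ↔ T.arc x y := .rfl

@[simp]
theorem ILTT_arc_inr_inl : T.ILTT.arc (Sum.inr x) (Sum.inl y) ↔ T.arc x y ∨ x = y := .rfl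

@[simp]
theorem ILTT_arc_inr_inr : T.ILTT.arc (Sum.inr x) (Sum.inr y) ↔ T.arc x y := .rfl

end Arcs

theorem card_ILTT (T : Tournament) : Fintype.card T.ILTT.V = 2 * Fintype.card T.V :=
  Fintype.card_sum.trans (two_mul _).symm

/-- The projection of the ILTT extension onto the base tournament: it fixes the original nodes and
sends each clone `x'` to `x`. -/
def original : T.ILTT.V → T.V := Sum.elim id id

theorem reflTransGen_arc_original {u v : T.ILTT.V} (huv : T.ILTT.arc u v) :
    Relation.ReflTransGen T.arc (original u) (original v) := by
  rcases u with x | x <;> rcases v with y | y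
  · exact .single (ILTT_arc_inl_inl.mp huv)
  · exact .single (ILTT_arc_inl_inr.mp huv)
  · obtain hxy | rfl := ILTT_arc_inr_inl.mp huv
    · exact .single hxy
    · exact .refl
  · exact .single (ILTT_arc_inr_inr.mp huv)

theorem Strong.of_ILTT (h : T.ILTT.Strong) : T.Strong := fun x y =>
  Relation.ReflTransGen.lift' original (fun _ _ => reflTransGen_arc_original) _ _
    (h (Sum.inl x) (Sum.inl y))

theorem Strong.reflTransGen_ILTT_inl (h : T.Strong) (u : T.ILTT.V) (y : T.V) :
    Relation.ReflTransGen T.ILTT.arc u (Sum.inl y) := by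
  have originals (x : T.V) : Relation.ReflTransGen T.ILTT.arc (Sum.inl x) (Sum.inl y) :=
    Relation.ReflTransGen.lift Sum.inl (fun _ _ => ILTT_arc_inl_inl.mpr) _ _ (h x y)
  rcases u with x | x
  · exact originals x
  · exact .head (ILTT_arc_inr_inl.mpr (.inr rfl)) (originals x)

theorem Strong.ILTT (h : T.Strong) (exists_arc : ∀ y, ∃ x, T.arc x y) : T.ILTT.Strong := by
  rintro u (y | y)
  · exact h.reflTransGen_ILTT_inl u y
  · obtain ⟨x, hxy⟩ := exists_arc y
    exact .tail (h.reflTransGen_ILTT_inl u x) (ILTT_arc_inl_inr.mpr hxy)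

theorem Strong.exists_arc [Nontrivial T.V] (h : T.Strong) (y : T.V) : ∃ x, T.arc x y := by
  obtain ⟨z, hzy⟩ := exists_ne y
  obtain hyz | ⟨x, -, hxy⟩ := (h z y).cases_tail
  · exact absurd hyz.symm hzy
  · exact ⟨x, hxy⟩

theorem strong_ILTT_iff [Nontrivial T.V] : T.ILTT.Strong ↔ T.Strong :=
  ⟨Strong.of_ILTT, fun h => h.ILTT h.exists_arc⟩

end Tournament

/-- For a tournament `G` of order at least 3 and every `t ≥ 1`,
`ILTT^t(G)` is strong if and only if `G` is strong. -/
theorem stmt0 (G : Tournament) (hcard : 3 ≤ Fintype.card G.V) :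
    ∀ t : ℕ, 1 ≤ t → ((Tournament.ILTT^[t] G).Strong ↔ G.Strong) := by
  rintro t -
  induction t generalizing G with
  | zero => rfl
  | succ t ih =>
    have : Nontrivial G.V := Fintype.one_lt_card_iff_nontrivial.mp (by lia)
    have hcard_ILTT : 3 ≤ Fintype.card G.ILTT.V := by
      rw [card_ILTT]
      lia
    rw [Function.iterate_succ_apply, ih G.ILTT hcard_ILTT, strong_ILTT_iff]
end
end

section
/- Let G be a strong tournament of order at least 3. Then for every node x of G, the distance in ILTT(G) from x to its clone x' equals 3 (in particular, there is no directed path of length at most 2 from x to x' in ILTT(G)). -/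
open scoped Classical

noncomputable section

open Tournament

/-!
Every arc of `ILTT(G)` out of a node `x` or into a clone `x'` projects to an arc of `G`, so a walk
of length 1 or 2 from `x` to `x'` would project to a loop or a 2-cycle at `x`. On the other hand,
a closed walk of `G` from `x` leaves the out-neighbourhood of `x` along some arc `(b, c)`, which
completes to a directed triangle `x → b → c → x`, and this lifts to the walk `x → b → c → x'`.
-/

lemma exists_rel_and_not_of_reflTransGen {α : Type*} {r : α → α → Prop} {p : α → Prop} {a b : α}
    (hab : Relation.ReflTransGen r a b) (ha : p a) (hb : ¬ p b) :
    ∃ c d, r c d ∧ p c ∧ ¬ p d := by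
  induction hab using Relation.ReflTransGen.head_induction_on with
  | refl => exact absurd ha hb
  | @head a c hac _ ih =>
    by_cases hc : p c
    · exact ih hc
    · exact ⟨a, c, hac, ha, hc⟩

namespace Tournament

variable {T : Tournament}

lemma arc_asymm {x y : T.V} (hxy : T.arc x y) : ¬ T.arc y x :=
  have hne : x ≠ y := fun h => T.irrefl y (h ▸ hxy)
  (T.exactlyOne x y hne).mp hxy

lemma arc_of_not_arc {x y : T.V} (hne : x ≠ y) (hxy : ¬ T.arc x y) : T.arc y x :=
  (T.exactlyOne y x hne.symm).mpr hxy

lemma exists_triangle_of_transGen_self {x : T.V} (hx : Relation.TransGen T.arc x x) :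
    ∃ b c, T.arc x b ∧ T.arc b c ∧ T.arc c x := by
  obtain ⟨a, hxa, hax⟩ := Relation.TransGen.head'_iff.mp hx
  obtain ⟨b, c, hbc, hxb, hxc⟩ := exists_rel_and_not_of_reflTransGen hax hxa (T.irrefl x)
  have hne : x ≠ c := by
    rintro rfl
    exact arc_asymm hxb hbc
  exact ⟨b, c, hxb, hbc, arc_of_not_arc hne hxc⟩

lemma Strong.transGen_self [Nontrivial T.V] (hT : T.Strong) (x : T.V) :
    Relation.TransGen T.arc x x := by
  obtain ⟨y, hyx⟩ := exists_ne x
  have hxy : Relation.TransGen T.arc x y :=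
    (Relation.reflTransGen_iff_eq_or_transGen.mp (hT x y)).resolve_left hyx
  exact hxy.trans_left (hT y x)

section Walk

variable {u v : T.V} {n : ℕ}

lemma hasWalk_zero_iff : T.HasWalk u v 0 ↔ u = v := by
  constructor
  · rintro ⟨f, hu, hv, -⟩
    exact hu.symm.trans hv
  · rintro rfl
    exact ⟨fun _ => u, rfl, rfl, Fin.elim0⟩

lemma hasWalk_succ_iff : T.HasWalk u v (n + 1) ↔ ∃ w, T.arc u w ∧ T.HasWalk w v n := by
  constructor
  · rintro ⟨f, rfl, hv, hf⟩
    exact ⟨f 1, hf 0, Fin.tail f, rfl, hv, fun i => hf i.succ⟩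
  · rintro ⟨w, huw, f, rfl, hv, hf⟩
    exact ⟨Fin.cons u f, rfl, hv, Fin.cases huw hf⟩

lemma hasWalk_one_iff : T.HasWalk u v 1 ↔ T.arc u v := by
  simp only [hasWalk_succ_iff, hasWalk_zero_iff, exists_eq_right]

lemma dist_eq_of_hasWalk (hn : T.HasWalk u v n) (hmin : ∀ m < n, ¬ T.HasWalk u v m) :
    T.dist u v = n :=
  IsLeast.csInf_eq ⟨hn, fun m hm => not_lt.mp fun hmn => hmin m hmn hm⟩

end Walk

/-- The projection of `ILTT(T)` onto `T` sending a node and its clone to the node. The only arcs it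
does not carry to arcs are those from a clone to its original. -/
def ILTT.proj (T : Tournament) : T.ILTT.V → T.V := Sum.elim id id

lemma ILTT.arc_inl_iff {x : T.V} {v : T.ILTT.V} :
    T.ILTT.arc (Sum.inl x) v ↔ T.arc x (ILTT.proj T v) := by
  cases v <;> rfl

lemma ILTT.arc_inr_iff {u : T.ILTT.V} {y : T.V} :
    T.ILTT.arc u (Sum.inr y) ↔ T.arc (ILTT.proj T u) y := by
  cases u <;> rfl

lemma ILTT.not_hasWalk_clone_of_le_two {x : T.V} {n : ℕ} (hn : n ≤ 2) :
    ¬ T.ILTT.HasWalk (Sum.inl x) (Sum.inr x) n := by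
  intro hwalk
  interval_cases n
  · exact Sum.inl_ne_inr (hasWalk_zero_iff.mp hwalk)
  · exact T.irrefl x (ILTT.arc_inl_iff.mp (hasWalk_one_iff.mp hwalk))
  · obtain ⟨w, hxw, hwx⟩ := hasWalk_succ_iff.mp hwalk
    exact arc_asymm (ILTT.arc_inl_iff.mp hxw) (ILTT.arc_inr_iff.mp (hasWalk_one_iff.mp hwx))

lemma ILTT.hasWalk_clone_three {x b c : T.V} (hxb : T.arc x b) (hbc : T.arc b c)
    (hcx : T.arc c x) : T.ILTT.HasWalk (Sum.inl x) (Sum.inr x) 3 :=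
  hasWalk_succ_iff.mpr ⟨Sum.inl b, ILTT.arc_inl_iff.mpr hxb,
    hasWalk_succ_iff.mpr ⟨Sum.inl c, ILTT.arc_inl_iff.mpr hbc,
      hasWalk_one_iff.mpr (ILTT.arc_inr_iff.mpr hcx)⟩⟩

end Tournament

theorem stmt1_general (G : Tournament) (x : G.V) (hx : Relation.TransGen G.arc x x) :
    (G.ILTT).dist (Sum.inl x) (Sum.inr x) = 3 ∧
    ∀ n : ℕ, n ≤ 2 → ¬ (G.ILTT).HasWalk (Sum.inl x) (Sum.inr x) n := by
  obtain ⟨b, c, hxb, hbc, hcx⟩ := exists_triangle_of_transGen_self hx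
  have hwalk : G.ILTT.HasWalk (Sum.inl x) (Sum.inr x) 3 := ILTT.hasWalk_clone_three hxb hbc hcx
  have hshort : ∀ n ≤ 2, ¬ G.ILTT.HasWalk (Sum.inl x) (Sum.inr x) n :=
    fun _ => ILTT.not_hasWalk_clone_of_le_two
  exact ⟨dist_eq_of_hasWalk hwalk fun n hn => hshort n (Nat.le_of_lt_succ hn), hshort⟩

/-- In a strong tournament `G` of order at least 3, the distance in
`ILTT(G)` from any node `x` to its clone `x'` equals 3; in particular there is no
directed path of length at most 2 from `x` to `x'`. -/
theorem stmt1 (G : Tournament) (hcard : 3 ≤ Fintype.card G.V) (hG : G.Strong)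
    (x : G.V) :
    (G.ILTT).dist (Sum.inl x) (Sum.inr x) = 3 ∧
    ∀ n : ℕ, n ≤ 2 → ¬ (G.ILTT).HasWalk (Sum.inl x) (Sum.inr x) n := by
  have : Nontrivial G.V := Fintype.one_lt_card_iff_nontrivial.mp (by omega)
  exact stmt1_general G x (hG.transGen_self x)
end
end

section
/- Let G be a tournament with no sink. Then for every integer t ≥ 1, the iterated dual tournament ILTT_d^t(G) is strong. -/
open scoped Classical

noncomputable section

open Tournament

/-!
Along an arc `x → y` the dual extension has the path `y ⇝ y' → x' → x`, where `y` reaches its own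
clone through `y → z' → y'` for any out-neighbour `z` of `y`, and `x' → x` always. So every arc
between original nodes can be traversed backwards, and weak connectivity of the original digraph
is enough for strong connectivity of the extension. Having no sink is inherited by the extension.
-/

open Relation

universe u

/-- A digraph, possibly infinite and with loops, bundled with its node type: the dual extension
changes the node type, so iterating it needs both together. -/
structure BundledDigraph where
  V : Type u
  arc : V → V → Prop

namespace BundledDigraph

/-- The dual ILTT extension of a digraph, with `Sum.inl x` the original node `x` and `Sum.inr x`
its clone `x'`. -/
def ILTTd (D : BundledDigraph.{u}) : BundledDigraph.{u} where
  V := D.V ⊕ D.V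
  arc
    | .inl x, .inl y => D.arc x y
    | .inl x, .inr y => D.arc x y
    | .inr x, .inl y => D.arc x y ∨ x = y
    | .inr x, .inr y => D.arc y x

/-- A digraph has no sink if every node has an outgoing arc. For this a loop counts as outgoing. -/
def NoSink (D : BundledDigraph.{u}) : Prop := Relator.LeftTotal D.arc

/-- A digraph is weakly connected if any two nodes are joined by a path that may traverse arcs in
either direction. -/
def WeaklyConnected (D : BundledDigraph.{u}) : Prop :=
  ∀ x y : D.V, ReflTransGen (SymmGen D.arc) x y

/-- A digraph is strong if every node reaches every node along a directed path. -/
def Strong (D : BundledDigraph.{u}) : Prop := ∀ x y : D.V, ReflTransGen D.arc x y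

variable {D : BundledDigraph.{u}}

theorem Strong.weaklyConnected (hD : D.Strong) : D.WeaklyConnected :=
  fun x y => ReflTransGen.mono (fun _ _ => .of_rel) x y (hD x y)

/-- The node `x` of `D` seen as an original node of the dual extension. -/
abbrev original (x : D.V) : D.ILTTd.V := Sum.inl x

/-- The clone `x'` of `x` in the dual extension. -/
abbrev clone (x : D.V) : D.ILTTd.V := Sum.inr x

theorem arc_clone_original (x : D.V) : D.ILTTd.arc (clone x) (original x) := Or.inr rfl

theorem NoSink.noSink_ILTTd (hD : D.NoSink) : D.ILTTd.NoSink
  | .inl x => let ⟨y, hxy⟩ := hD x; ⟨original y, hxy⟩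
  | .inr x => ⟨original x, arc_clone_original x⟩

theorem NoSink.noSink_iterate_ILTTd (hD : D.NoSink) (t : ℕ) : (ILTTd^[t] D).NoSink :=
  Function.Iterate.rec NoSink hD (fun _ => noSink_ILTTd) t

theorem NoSink.reflTransGen_original_clone (hD : D.NoSink) (x : D.V) :
    ReflTransGen D.ILTTd.arc (original x) (clone x) := by
  obtain ⟨z, hxz⟩ := hD x
  have original_to_clone : D.ILTTd.arc (original x) (clone z) := hxz
  have clone_to_clone : D.ILTTd.arc (clone z) (clone x) := hxz
  exact .head original_to_clone (.single clone_to_clone)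

theorem NoSink.reflTransGen_original_of_arc_symm (hD : D.NoSink) {x y : D.V} (hxy : D.arc x y) :
    ReflTransGen D.ILTTd.arc (original y) (original x) := by
  have clone_to_clone : D.ILTTd.arc (clone y) (clone x) := hxy
  exact ((hD.reflTransGen_original_clone y).tail clone_to_clone).tail (arc_clone_original x)

theorem NoSink.reflTransGen_original_of_symmGen (hD : D.NoSink) {x y : D.V}
    (hxy : SymmGen D.arc x y) : ReflTransGen D.ILTTd.arc (original x) (original y) :=
  hxy.elim (fun forward : D.ILTTd.arc (original x) (original y) => .single forward)
    hD.reflTransGen_original_of_arc_symm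

theorem NoSink.strong_ILTTd (hD : D.NoSink) (hconn : D.WeaklyConnected) : D.ILTTd.Strong := by
  have between_originals (x y : D.V) : ReflTransGen D.ILTTd.arc (original x) (original y) :=
    ReflTransGen.lift' original (fun _ _ => hD.reflTransGen_original_of_symmGen) x y (hconn x y)
  have to_original : ∀ u : D.ILTTd.V, ∃ x, ReflTransGen D.ILTTd.arc u (original x)
    | .inl x => ⟨x, .refl⟩
    | .inr x => ⟨x, .single (arc_clone_original x)⟩
  have from_original : ∀ v : D.ILTTd.V, ∃ y, ReflTransGen D.ILTTd.arc (original y) v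
    | .inl y => ⟨y, .refl⟩
    | .inr y => ⟨y, hD.reflTransGen_original_clone y⟩
  intro u v
  obtain ⟨x, hux⟩ := to_original u
  obtain ⟨y, hyv⟩ := from_original v
  exact (hux.trans (between_originals x y)).trans hyv

end BundledDigraph

theorem stmt2_general (D : BundledDigraph.{u}) (hsink : D.NoSink) (hconn : D.WeaklyConnected)
    {t : ℕ} (ht : 1 ≤ t) : (BundledDigraph.ILTTd^[t] D).Strong := by
  induction t, ht using Nat.le_induction with
  | base => exact hsink.strong_ILTTd hconn
  | succ t _ ih =>
    rw [Function.iterate_succ_apply']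
    exact (hsink.noSink_iterate_ILTTd t).strong_ILTTd ih.weaklyConnected

namespace Tournament

/-- The digraph underlying a tournament. -/
def toBundledDigraph (T : Tournament) : BundledDigraph := ⟨T.V, T.arc⟩

theorem strong_toBundledDigraph {T : Tournament} : T.toBundledDigraph.Strong ↔ T.Strong := Iff.rfl

theorem toBundledDigraph_ILTTd (T : Tournament) :
    T.ILTTd.toBundledDigraph = T.toBundledDigraph.ILTTd := by
  refine congrArg (BundledDigraph.mk (T.V ⊕ T.V)) ?_
  funext u v
  rcases u with x | x <;> rcases v with y | y <;> rfl

theorem toBundledDigraph_iterate_ILTTd (T : Tournament) (t : ℕ) :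
    (ILTTd^[t] T).toBundledDigraph = BundledDigraph.ILTTd^[t] T.toBundledDigraph :=
  Function.Semiconj.iterate_right toBundledDigraph_ILTTd t T

theorem weaklyConnected_toBundledDigraph (T : Tournament) :
    T.toBundledDigraph.WeaklyConnected := by
  intro x y
  by_cases hxy : x = y
  · exact hxy ▸ .refl
  · have arc_or_arc : T.arc x y ∨ T.arc y x := or_iff_not_imp_right.mpr (T.exactlyOne x y hxy).mpr
    exact .single arc_or_arc

end Tournament

/-- If `G` has no sink, then `ILTT_d^t(G)` is strong for all `t ≥ 1`. -/
theorem stmt2 (G : Tournament) (hsink : ∀ x : G.V, ∃ y : G.V, G.arc x y) :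
    ∀ t : ℕ, 1 ≤ t → (Tournament.ILTTd^[t] G).Strong := by
  intro t ht
  rw [← strong_toBundledDigraph, toBundledDigraph_iterate_ILTTd]
  exact stmt2_general G.toBundledDigraph hsink G.weaklyConnected_toBundledDigraph ht
end
end

section
/- Let G be a nonempty tournament. Then for every integer t ≥ 1, the linear order on t nodes is a subtournament of ILTT^t(G), and also a subtournament of ILTT_d^t(G). -/
open scoped Classical

noncomputable section

open Tournament

/-!
If all arcs among `x₁, …, xₙ` point forward in `T`, the clone `x₁'` dominates `x₁` and all of its
out-neighbours, so all arcs among `x₁', x₁, …, xₙ` point forward in the extension. Each extension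
therefore lengthens a nonempty linear order by one, and the arcs among clones, the only place where
`ILTT` and `ILTTd` differ, never matter.
-/

namespace Tournament

variable {J S T : Tournament}

instance : Std.Asymm T.arc where
  asymm x y hxy :=
    have hne : x ≠ y := fun h => T.irrefl x (h ▸ hxy)
    (T.exactlyOne x y hne).mp hxy

instance : Std.Trichotomous T.arc where
  trichotomous x y hxy hyx := by
    by_contra hne
    exact hxy ((T.exactlyOne x y hne).mpr hyx)

theorem isSubtournament_of_arc_imp_arc (f : J.V → T.V)
    (hf : ∀ x y, J.arc x y → T.arc (f x) (f y)) : J.IsSubtournament T :=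
  let e : J.arc ↪r T.arc := RelEmbedding.ofMonotone f hf
  ⟨e, e.injective, fun _ _ => e.map_rel_iff.symm⟩

theorem linearTournament_isSubtournament_iff {n : ℕ} :
    (linearTournament n).IsSubtournament T ↔ ∃ l : List T.V, l.Pairwise T.arc ∧ l.length = n := by
  constructor
  · rintro ⟨f, -, hf⟩
    exact ⟨List.ofFn f, List.pairwise_ofFn.mpr fun i j hij => (hf i j).mp hij, List.length_ofFn⟩
  · rintro ⟨l, hl, rfl⟩
    exact isSubtournament_of_arc_imp_arc l.get (List.pairwise_iff_get.mp hl)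

theorem linearTournament_isSubtournament_of_le {m n : ℕ} (hmn : m ≤ n)
    (h : (linearTournament n).IsSubtournament T) : (linearTournament m).IsSubtournament T := by
  rw [linearTournament_isSubtournament_iff] at h ⊢
  obtain ⟨l, hl, rfl⟩ := h
  exact ⟨l.take m, hl.take, List.length_take_of_le hmn⟩

theorem linearTournament_one_isSubtournament [Nonempty T.V] :
    (linearTournament 1).IsSubtournament T :=
  linearTournament_isSubtournament_iff.mpr
    ⟨[Classical.arbitrary T.V], List.pairwise_singleton _ _, rfl⟩

/-- `S` is a clone extension of `T` when it contains a copy of `T` and, for each node `x` of `T`, a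
node `x'` (a clone of `x`) dominating the copies of `x` and of its out-neighbours. This is what
`ILTT T` and `ILTTd T` have in common that matters for linear orders; the other arcs at clones are
left unconstrained. -/
def IsCloneExtension (S T : Tournament) : Prop :=
  ∃ orig clone : T.V → S.V, (∀ x y, T.arc x y → S.arc (orig x) (orig y)) ∧
    ∀ x y, T.arc x y ∨ x = y → S.arc (clone x) (orig y)

theorem isCloneExtension_ILTT (T : Tournament) : (ILTT T).IsCloneExtension T :=
  ⟨Sum.inl, Sum.inr, fun _ _ h => h, fun _ _ h => h⟩

theorem isCloneExtension_ILTTd (T : Tournament) : (ILTTd T).IsCloneExtension T :=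
  ⟨Sum.inl, Sum.inr, fun _ _ h => h, fun _ _ h => h⟩

theorem IsCloneExtension.linearTournament_isSubtournament (hST : S.IsCloneExtension T) {n : ℕ}
    (h : (linearTournament (n + 1)).IsSubtournament T) :
    (linearTournament (n + 2)).IsSubtournament S := by
  rw [linearTournament_isSubtournament_iff] at h ⊢
  obtain ⟨orig, clone, horig, hclone⟩ := hST
  obtain ⟨l, hl, hlen⟩ := h
  obtain ⟨x, l', rfl⟩ := List.exists_cons_of_length_eq_add_one hlen
  have hsource : ∀ y ∈ x :: l', T.arc x y ∨ x = y := by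
    intro y hy
    rcases List.mem_cons.mp hy with rfl | hy
    · exact Or.inr rfl
    · exact Or.inl (List.rel_of_pairwise_cons hl hy)
  have hdom : ∀ z ∈ (x :: l').map orig, S.arc (clone x) z :=
    List.forall_mem_map.mpr fun y hy => hclone x y (hsource y hy)
  refine ⟨clone x :: (x :: l').map orig, List.pairwise_cons.mpr ⟨hdom, hl.map orig horig⟩, ?_⟩
  rw [List.length_cons, List.length_map, hlen]

theorem linearTournament_isSubtournament_iterate {F : Tournament → Tournament}
    (hF : ∀ T, (F T).IsCloneExtension T) {n : ℕ}
    (h : (linearTournament (n + 1)).IsSubtournament T) (t : ℕ) :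
    (linearTournament (n + t + 1)).IsSubtournament (F^[t] T) := by
  induction t with
  | zero => exact h
  | succ t ih =>
    rw [Function.iterate_succ_apply']
    exact (hF _).linearTournament_isSubtournament ih

end Tournament

/-- For a nonempty tournament `G` and every `t ≥ 1`, the linear
order on `t` nodes is a subtournament of both `ILTT^t(G)` and `ILTT_d^t(G)`. -/
theorem stmt11 (G : Tournament) (hne : Nonempty G.V) :
    ∀ t : ℕ, 1 ≤ t →
      (linearTournament t).IsSubtournament (Tournament.ILTT^[t] G) ∧
      (linearTournament t).IsSubtournament (Tournament.ILTTd^[t] G) := by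
  intro t _
  have hG : (linearTournament (0 + 1)).IsSubtournament G := linearTournament_one_isSubtournament
  have ht : t ≤ 0 + t + 1 := by lia
  exact
    ⟨linearTournament_isSubtournament_of_le ht
      (linearTournament_isSubtournament_iterate isCloneExtension_ILTT hG t),
    linearTournament_isSubtournament_of_le ht
      (linearTournament_isSubtournament_iterate isCloneExtension_ILTTd hG t)⟩
end
end
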